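/- In the rooted dynamic-programming setting, suppose φ : Fin M → A → ℝ satisfies the Bellman equation, and define an assignment x* : Fin M → A top-down (processing indices in decreasing order, so that each node is assigned after its parent) by choosing x* r ∈ argmin_{p ∈ A} φ r p and, for each j ≠ r, choosing x* j ∈ argmin_{q ∈ A} (w j q (x* (parent j)) + φ j q). Then Φ(x*) = min_{x : Fin M → A} Φ(x); that is, the traceback produces an optimal joint assignment of Steiner node locations. -/

import Mathlib

/-- The total cost of the cable network for an assignment `x` of locations to
the Steiner nodes: the sum of the node costs plus the sum, over all non-root
nodes, of the cable cost from the node's location to its parent's location. -/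
noncomputable def totalCost {M : ℕ} {A : Type*} (r : Fin M)
    (parent : Fin M → Fin M) (c : Fin M → A → ℝ) (w : Fin M → A → A → ℝ)
    (x : Fin M → A) : ℝ :=
  (∑ i : Fin M, c i (x i)) +
    ∑ j ∈ Finset.univ.filter (fun j : Fin M => j ≠ r), w j (x j) (x (parent j))

/-!
Write `m j p` for the minimum over `q` of `w j q p + φ j q`. Sum the Bellman equation at `(i, x i)`
over all nodes `i`: every non-root node is a child of exactly one node, and the `φ`-terms of the
non-root nodes cancel up to the slacks `w j (x j) p + φ j (x j) - m j p`, `p = x (parent j)`. Hence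
the cost of `x` is `φ r (x r)` plus the sum of these slacks, which are nonnegative for every `x` and
vanish for the traceback. So `φ r (x r)` bounds the cost of `x` from below, with equality for the
traceback, which also minimizes `φ r`.
-/

section Traceback

open Finset

theorem isGLB_range_inf'_univ {α β : Type*} [Fintype α] [Nonempty α] [SemilatticeInf β]
    (f : α → β) : IsGLB (Set.range f) (univ.inf' univ_nonempty f) :=
  ⟨Set.forall_mem_range.mpr fun a => inf'_le f (mem_univ a),
    fun _ hb => le_inf' _ _ fun a _ => hb (Set.mem_range_self a)⟩

theorem sum_fiberwise_apply {ι κ R : Type*} [Fintype ι] [DecidableEq ι] [AddCommMonoid R]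
    (s : Finset κ) (g : κ → ι) (f : κ → ι → R) :
    ∑ i, ∑ j ∈ s with g j = i, f j i = ∑ j ∈ s, f j (g j) := by
  rw [← sum_fiberwise s g]
  refine sum_congr rfl fun i _ => sum_congr rfl fun j hj => ?_
  rw [(mem_filter.mp hj).2]

variable {ι A R : Type*} [Fintype ι] [DecidableEq ι] [AddCommMonoid R]

/-- The cost of an assignment `x` of locations to the nodes, as in `totalCost`, but for an arbitrary
finite node type `ι` and costs in an additive commutative monoid. -/
def networkCost (r : ι) (parent : ι → ι) (c : ι → A → R) (w : ι → A → A → R) (x : ι → A) : R :=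
  ∑ i, c i (x i) + ∑ j with j ≠ r, w j (x j) (x (parent j))

/-- The Bellman equation for the value function `φ`, where `m j p` stands for the optimal
contribution of the child `j` to a parent located at `p`. That `m j p` is the infimum of
`w j q p + φ j q` over `q` is left to a separate hypothesis, since over an infinite `A` this infimum
need not exist. -/
def SatisfiesBellman (r : ι) (parent : ι → ι) (c m φ : ι → A → R) : Prop :=
  ∀ i p, φ i p = c i p + ∑ j with j ≠ r ∧ parent j = i, m j p

variable {r : ι} {parent : ι → ι} {c m φ : ι → A → R} {w : ι → A → A → R}

theorem SatisfiesBellman.sum_eq (hφ : SatisfiesBellman r parent c m φ) (x : ι → A) :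
    ∑ i, φ i (x i) = ∑ i, c i (x i) + ∑ j with j ≠ r, m j (x (parent j)) :=
  calc ∑ i, φ i (x i)
      = ∑ i, (c i (x i) + ∑ j with j ≠ r ∧ parent j = i, m j (x i)) :=
        sum_congr rfl fun i _ => hφ i (x i)
    _ = ∑ i, c i (x i) + ∑ j with j ≠ r, m j (x (parent j)) := by
        simp only [sum_add_distrib, ← filter_filter,
          sum_fiberwise_apply _ parent fun j i => m j (x i)]

/-- The sum of the `m j` stands on the left so that no subtraction occurs; on the right it would turn
the last sum into the sum of the slacks. -/
theorem SatisfiesBellman.networkCost_add_sum_eq (hφ : SatisfiesBellman r parent c m φ)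
    (x : ι → A) :
    networkCost r parent c w x + ∑ j with j ≠ r, m j (x (parent j)) =
      φ r (x r) + ∑ j with j ≠ r, (w j (x j) (x (parent j)) + φ j (x j)) := by
  have split_root : φ r (x r) + ∑ j with j ≠ r, φ j (x j) = ∑ i, φ i (x i) := by
    rw [filter_ne', add_sum_erase _ (fun i => φ i (x i)) (mem_univ r)]
  calc networkCost r parent c w x + ∑ j with j ≠ r, m j (x (parent j))
      = ∑ i, φ i (x i) + ∑ j with j ≠ r, w j (x j) (x (parent j)) := by
        rw [networkCost, hφ.sum_eq, add_right_comm]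
    _ = φ r (x r) + ∑ j with j ≠ r, (w j (x j) (x (parent j)) + φ j (x j)) := by
        rw [← split_root, sum_add_distrib, add_assoc, add_comm (∑ j with j ≠ r, φ j (x j))]

theorem SatisfiesBellman.networkCost_eq [IsRightCancelAdd R]
    (hφ : SatisfiesBellman r parent c m φ) {x : ι → A}
    (hx : ∀ j ≠ r, m j (x (parent j)) = w j (x j) (x (parent j)) + φ j (x j)) :
    networkCost r parent c w x = φ r (x r) := by
  have sum_eq : ∑ j with j ≠ r, m j (x (parent j)) =
      ∑ j with j ≠ r, (w j (x j) (x (parent j)) + φ j (x j)) :=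
    sum_congr rfl fun j hj => hx j (mem_filter.mp hj).2
  apply add_right_cancel (b := ∑ j with j ≠ r, m j (x (parent j)))
  rw [hφ.networkCost_add_sum_eq, sum_eq]

variable [PartialOrder R] [IsOrderedCancelAddMonoid R]

theorem SatisfiesBellman.le_networkCost (hφ : SatisfiesBellman r parent c m φ) {x : ι → A}
    (hx : ∀ j ≠ r, m j (x (parent j)) ≤ w j (x j) (x (parent j)) + φ j (x j)) :
    φ r (x r) ≤ networkCost r parent c w x := by
  apply le_of_add_le_add_right (a := ∑ j with j ≠ r, m j (x (parent j)))
  rw [hφ.networkCost_add_sum_eq]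
  gcongr with j hj
  exact hx j (mem_filter.mp hj).2

theorem traceback_optimal_general
    (hm : ∀ j ≠ r, ∀ p, IsGLB (Set.range fun q => w j q p + φ j q) (m j p))
    (hφ : SatisfiesBellman r parent c m φ) {xs : ι → A}
    (hroot : ∀ p, φ r (xs r) ≤ φ r p)
    (hstep : ∀ j ≠ r, ∀ q,
      w j (xs j) (xs (parent j)) + φ j (xs j) ≤ w j q (xs (parent j)) + φ j q) :
    IsLeast (Set.range (networkCost r parent c w)) (networkCost r parent c w xs) := by
  refine ⟨Set.mem_range_self xs, Set.forall_mem_range.mpr fun x => ?_⟩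
  have min_attained : ∀ j ≠ r,
      m j (xs (parent j)) = w j (xs j) (xs (parent j)) + φ j (xs j) := fun j hj =>
    have least : IsLeast (Set.range fun q => w j q (xs (parent j)) + φ j q)
        (w j (xs j) (xs (parent j)) + φ j (xs j)) :=
      ⟨Set.mem_range_self (xs j), Set.forall_mem_range.mpr (hstep j hj)⟩
    (hm j hj _).unique least.isGLB
  calc networkCost r parent c w xs
      = φ r (xs r) := hφ.networkCost_eq min_attained
    _ ≤ φ r (x r) := hroot (x r)
    _ ≤ networkCost r parent c w x :=
        hφ.le_networkCost fun j hj => (hm j hj _).1 (Set.mem_range_self (x j))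

end Traceback

/-- If `φ` satisfies the Bellman equation and `xs` is an assignment produced by
the top-down traceback (the root location minimizes `φ r`, and each non-root
node's location minimizes `w j q (xs (parent j)) + φ j q` given its parent's
location), then `xs` attains the minimum total cost over all assignments. -/
theorem traceback_optimal
    {M : ℕ} (hM : 1 ≤ M) (r : Fin M) (hr : (r : ℕ) = M - 1)
    (parent : Fin M → Fin M) (hpar : ∀ i : Fin M, i ≠ r → i < parent i)
    (hroot : parent r = r)
    {A : Type*} [Fintype A] [Nonempty A]
    (c : Fin M → A → ℝ) (w : Fin M → A → A → ℝ) (φ : Fin M → A → ℝ)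
    (hφ : ∀ (i : Fin M) (p : A), φ i p = c i p +
      ∑ j ∈ Finset.univ.filter (fun j : Fin M => j ≠ r ∧ parent j = i),
        Finset.univ.inf' Finset.univ_nonempty (fun q : A => w j q p + φ j q))
    (xs : Fin M → A)
    (hxroot : ∀ p : A, φ r (xs r) ≤ φ r p)
    (hxstep : ∀ j : Fin M, j ≠ r → ∀ q : A,
      w j (xs j) (xs (parent j)) + φ j (xs j) ≤ w j q (xs (parent j)) + φ j q) :
    totalCost r parent c w xs =
      Finset.univ.inf' Finset.univ_nonempty
        (fun x : Fin M → A => totalCost r parent c w x) :=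
  (traceback_optimal_general (fun _ _ _ => isGLB_range_inf'_univ _) hφ hxroot hxstep).isGLB.unique
    (isGLB_range_inf'_univ _)
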